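/- No re-entry during a pending call of Memo-at (Lemma 11): For every run s of an execution of Memo-at and every index ℓ ∈ {0, …, |s|−1} with s[ℓ] = C(q, i), neither C(q, i) nor M(q, i) appears in the subsequence s[ℓ+1] … s[φ_s(ℓ)]. -/

import Mathlib

namespace RegexMemo

/-! ## Generic runs, `φ`, `sub`, `sub*` -/

variable {α : Type}

/-- `φ_s(ℓ, n)`: the index of the result value of the call at index `ℓ`. -/
def phiAux (isRet : α → Bool) (s : List α) (ℓ n : ℕ) : Option ℕ :=
  match h : s[ℓ]? with
  | none => none
  | some e =>
    if isRet e then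
      if n ≤ 1 then some ℓ
      else phiAux isRet s (ℓ + 1) (n - 1)
    else phiAux isRet s (ℓ + 1) (n + 1)
termination_by s.length - ℓ
decreasing_by
  all_goals
    have hl : ℓ < s.length := by
      by_contra hc
      have : s[ℓ]? = none := List.getElem?_eq_none (by omega)
      simp [this] at h
    omega

/-- `φ_s(ℓ) = φ_s(ℓ, 0)`. -/
def phi (isRet : α → Bool) (s : List α) (ℓ : ℕ) : Option ℕ := phiAux isRet s ℓ 0

/-- `sub(s, ℓ)`: replace the memoization-table invocation at index `ℓ` (an element
`M(q,i)` together with its immediately following result) by `C(q,i)` followed by the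
subsequence `s[ℓ'+1] … s[φ_s(ℓ')]`, where `ℓ'` is the first index with `s[ℓ'] = C(q,i)`.
Here `m2c` maps a memoization element `M(q,i)` to the corresponding call element `C(q,i)`
(and everything else to `none`), and `isRet` recognizes result elements. -/
def subExpand [DecidableEq α] (m2c : α → Option α) (isRet : α → Bool)
    (s : List α) (ℓ : ℕ) : Option (List α) :=
  match s[ℓ]? with
  | some e =>
    match m2c e with
    | some c =>
      match s.findIdx? (· == c) with
      | some ℓ' =>
        match phi isRet s ℓ' with
        | some m =>
          some (s.take ℓ ++ [c] ++ ((s.drop (ℓ' + 1)).take (m - ℓ')) ++ s.drop (ℓ + 2))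
        | none => none
      | none => none
    | none => none
  | none => none

/-- `sub*`: repeatedly locate the first memoization element and expand it,
until no memoization element remains. `SubStar m2c isRet s t` means `sub*(s) = t`. -/
inductive SubStar [DecidableEq α] (m2c : α → Option α) (isRet : α → Bool) :
    List α → List α → Prop where
  | done {s : List α} : s.findIdx? (fun e => (m2c e).isSome) = none →
      SubStar m2c isRet s s
  | step {s s' t : List α} {ℓ : ℕ} :
      s.findIdx? (fun e => (m2c e).isSome) = some ℓ →
      subExpand m2c isRet s ℓ = some s' →
      SubStar m2c isRet s' t →
      SubStar m2c isRet s t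

/-- The number of (recursive) calls recorded in a run: the number of `C`/`M` elements. -/
def callCount (isCall : α → Bool) (s : List α) : ℕ := (s.filter isCall).length

variable {Sigma S : Type}

/-- Results of backtracking matching: `SuccessAt i'` or `Failure`. -/
inductive Result : Type where
  | successAt : ℕ → Result
  | failure : Result
deriving DecidableEq

/-! ## Plain NFAs -/

/-- Transitions of a plain NFA. -/
inductive Trans (Sigma S : Type) : Type where
  | eps : S → Trans Sigma S
  | branch : S → S → Trans Sigma S
  | char : Sigma → S → Trans Sigma S

/-- A (plain) NFA over the alphabet `Sigma` with (finite) state type `S`: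
an initial state, a set of accepting states, and a transition function
(whose value is only relevant on non-accepting states). -/
structure NFA (Sigma S : Type) where
  q0 : S
  F : Set S
  T : S → Trans Sigma S

/-- One ε-step: an `Eps` or `Branch` transition of a non-accepting state. -/
def NFA.epsStep (A : NFA Sigma S) (q q' : S) : Prop :=
  q ∉ A.F ∧ (A.T q = Trans.eps q' ∨ (∃ q'', A.T q = Trans.branch q' q'') ∨
    (∃ q'', A.T q = Trans.branch q'' q'))

/-- The NFA has no ε-loops. -/
def NFA.NoEpsLoops (A : NFA Sigma S) : Prop :=
  ∀ q : S, ¬ Relation.TransGen A.epsStep q q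

open Classical in
/-- The in-degree `#in(q)` of a state of a plain NFA. -/
noncomputable def NFA.inDeg [Fintype S] (A : NFA Sigma S) (q : S) : ℕ :=
  (Finset.univ.filter fun q' : S => q' ∉ A.F ∧ A.T q' = Trans.eps q).card +
  (Finset.univ.filter fun q' : S => q' ∉ A.F ∧ ∃ σ, A.T q' = Trans.char σ q).card +
  (Finset.univ.filter fun q' : S => q' ∉ A.F ∧ ∃ q'', A.T q' = Trans.branch q q'').card +
  (Finset.univ.filter fun q' : S => q' ∉ A.F ∧ ∃ q'', A.T q' = Trans.branch q'' q).card +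
  (if q = A.q0 then 1 else 0)

/-- The maximal in-degree `#in(A)` of a plain NFA. -/
noncomputable def NFA.inDegMax [Fintype S] (A : NFA Sigma S) : ℕ :=
  Finset.univ.sup fun q : S => A.inDeg q

/-- Elements of runs of `Match`/`Memo`: calls `C(q,i)`, memoization-table invocations
`M(q,i)`, and results `S(i')` and `F`. -/
inductive RunElem (S : Type) : Type where
  | call : S → ℕ → RunElem S
  | memo : S → ℕ → RunElem S
  | succ : ℕ → RunElem S
  | fail : RunElem S
deriving DecidableEq

/-- The run element recording the return of a result. -/
def Result.elem {S : Type} : Result → RunElem S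
  | .successAt i => .succ i
  | .failure => .fail

def RunElem.isRet : RunElem S → Bool
  | .succ _ => true
  | .fail => true
  | _ => false

def RunElem.isCall : RunElem S → Bool
  | .call _ _ => true
  | .memo _ _ => true
  | _ => false

/-- `M(q,i) ↦ C(q,i)`. -/
def memoToCall : RunElem S → Option (RunElem S)
  | .memo q i => some (.call q i)
  | _ => none

/-- Big-step semantics (together with the produced run) of the backtracking
matching algorithm `Match` for plain NFAs:
`MatchRun A w q i r s` means the call `Match_{A,w}(q, i)` terminates with
result `r` and produces the run `s`. -/
inductive MatchRun (A : NFA Sigma S) (w : List Sigma) :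
    S → ℕ → Result → List (RunElem S) → Prop where
  | accept {q : S} {i : ℕ} : q ∈ A.F →
      MatchRun A w q i (.successAt i) [.call q i, .succ i]
  | eps {q q' : S} {i : ℕ} {r : Result} {s : List (RunElem S)} :
      q ∉ A.F → A.T q = Trans.eps q' →
      MatchRun A w q' i r s →
      MatchRun A w q i r (.call q i :: s ++ [r.elem])
  | branchSucc {q q' q'' : S} {i i' : ℕ} {s : List (RunElem S)} :
      q ∉ A.F → A.T q = Trans.branch q' q'' →
      MatchRun A w q' i (.successAt i') s →
      MatchRun A w q i (.successAt i') (.call q i :: s ++ [RunElem.succ i'])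
  | branchFail {q q' q'' : S} {i : ℕ} {r : Result} {s s' : List (RunElem S)} :
      q ∉ A.F → A.T q = Trans.branch q' q'' →
      MatchRun A w q' i .failure s →
      MatchRun A w q'' i r s' →
      MatchRun A w q i r (.call q i :: s ++ s' ++ [r.elem])
  | charSucc {q q' : S} {σ : Sigma} {i : ℕ} {r : Result} {s : List (RunElem S)} :
      q ∉ A.F → A.T q = Trans.char σ q' →
      w[i]? = some σ →
      MatchRun A w q' (i + 1) r s →
      MatchRun A w q i r (.call q i :: s ++ [r.elem])
  | charFail {q q' : S} {σ : Sigma} {i : ℕ} :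
      q ∉ A.F → A.T q = Trans.char σ q' →
      w[i]? ≠ some σ →
      MatchRun A w q i .failure [.call q i, .fail]

/-- Record `M(q,i) := Failure` in the memoization table if the result is a failure. -/
def recFail [DecidableEq S] (M : S × ℕ → Bool) (q : S) (i : ℕ) : Result → (S × ℕ → Bool)
  | .failure => fun p => if p = (q, i) then true else M p
  | _ => M

/-- Big-step semantics (with resulting memoization table and produced run) of the
memoized backtracking matching algorithm `Memo` for plain NFAs:
`MemoRun A w q i M M' r s` means the call `Memo^M_{A,w}(q, i)` terminates with result
`r`, final memoization table `M'` (where `M p = true` means `Failure` is recorded at the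
key `p`), and produces the run `s`. -/
inductive MemoRun [DecidableEq S] (A : NFA Sigma S) (w : List Sigma) :
    S → ℕ → (S × ℕ → Bool) → (S × ℕ → Bool) → Result → List (RunElem S) → Prop where
  | memoHit {q : S} {i : ℕ} {M : S × ℕ → Bool} : M (q, i) = true →
      MemoRun A w q i M M .failure [.memo q i, .fail]
  | accept {q : S} {i : ℕ} {M : S × ℕ → Bool} : M (q, i) = false → q ∈ A.F →
      MemoRun A w q i M M (.successAt i) [.call q i, .succ i]
  | eps {q q' : S} {i : ℕ} {M M' : S × ℕ → Bool} {r : Result} {s : List (RunElem S)} :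
      M (q, i) = false → q ∉ A.F → A.T q = Trans.eps q' →
      MemoRun A w q' i M M' r s →
      MemoRun A w q i M (recFail M' q i r) r (.call q i :: s ++ [r.elem])
  | branchSucc {q q' q'' : S} {i i' : ℕ} {M M' : S × ℕ → Bool} {s : List (RunElem S)} :
      M (q, i) = false → q ∉ A.F → A.T q = Trans.branch q' q'' →
      MemoRun A w q' i M M' (.successAt i') s →
      MemoRun A w q i M M' (.successAt i') (.call q i :: s ++ [RunElem.succ i'])
  | branchFail {q q' q'' : S} {i : ℕ} {M M' M'' : S × ℕ → Bool} {r : Result}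
      {s s' : List (RunElem S)} :
      M (q, i) = false → q ∉ A.F → A.T q = Trans.branch q' q'' →
      MemoRun A w q' i M M' .failure s →
      MemoRun A w q'' i M' M'' r s' →
      MemoRun A w q i M (recFail M'' q i r) r (.call q i :: s ++ s' ++ [r.elem])
  | charSucc {q q' : S} {σ : Sigma} {i : ℕ} {M M' : S × ℕ → Bool} {r : Result}
      {s : List (RunElem S)} :
      M (q, i) = false → q ∉ A.F → A.T q = Trans.char σ q' →
      w[i]? = some σ →
      MemoRun A w q' (i + 1) M M' r s →
      MemoRun A w q i M (recFail M' q i r) r (.call q i :: s ++ [r.elem])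
  | charFail {q q' : S} {σ : Sigma} {i : ℕ} {M : S × ℕ → Bool} :
      M (q, i) = false → q ∉ A.F → A.T q = Trans.char σ q' →
      w[i]? ≠ some σ →
      MemoRun A w q i M (recFail M q i .failure) .failure [.call q i, .fail]

/-! ## NFAs with sub-automata -/

/-- Kind labels of sub-automaton transitions: positive/negative look-ahead/look-behind
and atomic grouping. -/
inductive Kind : Type where
  | pla | nla | plb | nlb | at
deriving DecidableEq

mutual
/-- An NFA with sub-automata `⟨Q, q0, F, T⟩`: a list of top-level states, an initial
state, accepting states, and a transition function (relevant on non-accepting top-level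
states) whose transitions may be labelled with further NFAs with sub-automata. -/
inductive SubNFA (Sigma S : Type) : Type where
  | mk : List S → S → List S → (S → SubTrans Sigma S) → SubNFA Sigma S

/-- Transitions of an NFA with sub-automata. -/
inductive SubTrans (Sigma S : Type) : Type where
  | eps : S → SubTrans Sigma S
  | branch : S → S → SubTrans Sigma S
  | char : Sigma → S → SubTrans Sigma S
  | sub : Kind → SubNFA Sigma S → S → SubTrans Sigma S
end

/-- Top-level states `Q`. -/
def SubNFA.Q : SubNFA Sigma S → List S
  | .mk Q _ _ _ => Q

/-- Initial state `q0`. -/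
def SubNFA.q0 : SubNFA Sigma S → S
  | .mk _ q0 _ _ => q0

/-- Accepting states `F`. -/
def SubNFA.F : SubNFA Sigma S → List S
  | .mk _ _ F _ => F

/-- Transition function `T`. -/
def SubNFA.T : SubNFA Sigma S → S → SubTrans Sigma S
  | .mk _ _ _ T => T

mutual
/-- All automata occurring within an NFA with sub-automata (including itself), each
together with its nesting depth of atomic grouping (the number of enclosing
`at`-sub-automaton boundaries). -/
def SubNFA.compsD : SubNFA Sigma S → List (SubNFA Sigma S × ℕ)
  | .mk Q q0 F T => (.mk Q q0 F T, 0) :: Q.flatMap (fun q => SubTrans.subCompsD (T q))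

def SubTrans.subCompsD : SubTrans Sigma S → List (SubNFA Sigma S × ℕ)
  | .sub k A' _ => (SubNFA.compsD A').map (fun p => (p.1, p.2 + (if k = Kind.at then 1 else 0)))
  | _ => []
end

/-- All automata occurring within `A` (including `A` itself). -/
def SubNFA.comps (A : SubNFA Sigma S) : List (SubNFA Sigma S) :=
  A.compsD.map Prod.fst

/-- The set (list) of all states `P` occurring within `A`. -/
def SubNFA.allStates (A : SubNFA Sigma S) : List S :=
  A.comps.flatMap SubNFA.Q

/-- The nesting depth of atomic grouping `ν_A(q)` of a state `q` of `A`. -/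
def SubNFA.nu [DecidableEq S] (A : SubNFA Sigma S) (q : S) : ℕ :=
  (A.compsD.map (fun p => if q ∈ p.1.Q then p.2 else 0)).sum

/-- The maximal nesting depth of atomic grouping `ν(A)`. -/
def SubNFA.nuMax [DecidableEq S] (A : SubNFA Sigma S) : ℕ :=
  (A.allStates.map A.nu).foldr max 0

/-- Local wellformedness of one automaton: the initial state is a top-level state,
accepting states are top-level states, and transitions of non-accepting top-level
states lead to top-level states. -/
def SubNFA.LocalOK (B : SubNFA Sigma S) : Prop :=
  B.q0 ∈ B.Q ∧ (∀ f ∈ B.F, f ∈ B.Q) ∧ ∀ q ∈ B.Q, q ∉ B.F →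
    match B.T q with
    | .eps q' => q' ∈ B.Q
    | .branch q' q'' => q' ∈ B.Q ∧ q'' ∈ B.Q
    | .char _ q' => q' ∈ B.Q
    | .sub _ _ q' => q' ∈ B.Q

/-- Wellformedness of an NFA with sub-automata: every component automaton is locally
wellformed, and all the state lists are disjoint and duplicate-free (so that `P` is
the disjoint union of the top-level state sets of all components). -/
def SubNFA.WF (A : SubNFA Sigma S) : Prop :=
  (∀ B ∈ A.comps, B.LocalOK) ∧ A.allStates.Nodup

/-- The kind labels of all sub-automaton transitions occurring in `A`. -/
def SubNFA.kinds [DecidableEq S] (A : SubNFA Sigma S) : List Kind :=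
  A.comps.flatMap fun B =>
    (B.Q.filter (fun q => decide (q ∉ B.F))).filterMap fun q =>
      match B.T q with
      | .sub k _ _ => some k
      | _ => none

/-- A la-NFA: all kind labels are look-around labels (for simplicity, only positive
look-ahead `pla` is treated). -/
def SubNFA.IsLaNFA [DecidableEq S] (A : SubNFA Sigma S) : Prop :=
  ∀ k ∈ A.kinds, k = Kind.pla

/-- An at-NFA: all kind labels are `at` (atomic grouping). -/
def SubNFA.IsAtNFA [DecidableEq S] (A : SubNFA Sigma S) : Prop :=
  ∀ k ∈ A.kinds, k = Kind.at

/-- A (la,at)-NFA in which (for simplicity) only the kinds `pla` and `at` occur. -/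
def SubNFA.IsLaAtNFA [DecidableEq S] (A : SubNFA Sigma S) : Prop :=
  ∀ k ∈ A.kinds, k = Kind.pla ∨ k = Kind.at

/-- One global ε-step of an NFA with sub-automata: an `Eps` or `Branch` transition, or a
`Sub` transition with a look-around kind (from the transition's source to its successor),
of a non-accepting top-level state of any component automaton. -/
def SubNFA.epsStep (A : SubNFA Sigma S) (q q' : S) : Prop :=
  ∃ B ∈ A.comps, q ∈ B.Q ∧ q ∉ B.F ∧
    (B.T q = SubTrans.eps q' ∨
     (∃ q'', B.T q = SubTrans.branch q' q'') ∨
     (∃ q'', B.T q = SubTrans.branch q'' q') ∨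
     (∃ k A'', B.T q = SubTrans.sub k A'' q' ∧ k ≠ Kind.at))

/-- The NFA with sub-automata has no ε-loops. -/
def SubNFA.NoEpsLoops (A : SubNFA Sigma S) : Prop :=
  ∀ q : S, ¬ Relation.TransGen A.epsStep q q

/-- All pairs (state, transition) of non-accepting top-level states of all component
automata of `A`. -/
def SubNFA.allTransNF [DecidableEq S] (A : SubNFA Sigma S) : List (S × SubTrans Sigma S) :=
  A.comps.flatMap fun B => (B.Q.filter (fun q => decide (q ∉ B.F))).map fun q => (q, B.T q)

/-- How many of the buckets in the definition of the in-degree of `q` a given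
transition contributes to. -/
def SubTrans.hits [DecidableEq S] (t : SubTrans Sigma S) (q : S) : ℕ :=
  match t with
  | .eps q' => if q' = q then 1 else 0
  | .char _ q' => if q' = q then 1 else 0
  | .branch q' q'' => (if q' = q then 1 else 0) + (if q'' = q then 1 else 0)
  | .sub _ _ q' => if q' = q then 1 else 0

/-- The in-degree `#in(q)` of a state of an NFA with sub-automata. -/
def SubNFA.inDeg [DecidableEq S] (A : SubNFA Sigma S) (q : S) : ℕ :=
  (A.allTransNF.map (fun p => p.2.hits q)).sum +
  (if q ∈ A.comps.map SubNFA.q0 then 1 else 0)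

/-- The maximal in-degree `#in(A)`. -/
def SubNFA.inDegMax [DecidableEq S] (A : SubNFA Sigma S) : ℕ :=
  (A.allStates.map A.inDeg).foldr max 0

/-! ## run elements for `Memo-la` and `Match-(la,at)` -/

/-- Elements of runs of `Memo-la` (and of `Match-(la,at)`): calls `C(q,i)`,
memoization-table invocations `M(q,i)`, and the results `S(i')`, `S'` (bare success),
and `F`. -/
inductive LaRunElem (S : Type) : Type where
  | call : S → ℕ → LaRunElem S
  | memo : S → ℕ → LaRunElem S
  | succAt : ℕ → LaRunElem S
  | succ : LaRunElem S
  | fail : LaRunElem S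
deriving DecidableEq

def LaRunElem.isRet : LaRunElem S → Bool
  | .succAt _ => true
  | .succ => true
  | .fail => true
  | _ => false

def LaRunElem.isCall : LaRunElem S → Bool
  | .call _ _ => true
  | .memo _ _ => true
  | _ => false

def laMemoToCall : LaRunElem S → Option (LaRunElem S)
  | .memo q i => some (.call q i)
  | _ => none

def Result.laElem {S : Type} : Result → LaRunElem S
  | .successAt i => .succAt i
  | .failure => .fail

/-! ## The backtracking matching algorithm `Match-(la,at)` -/

/-- Big-step semantics (with produced run) of the backtracking matching algorithm
`Match-(la,at)` for NFAs with sub-automata: `LAMatchRun w A q i r s` means the call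
`Match-(la,at)_{A,w}(q, i)` terminates with result `r` and produces the run `s`.
For simplicity, only the look-around kind `pla` (besides `at`) is treated. -/
inductive LAMatchRun (w : List Sigma) :
    SubNFA Sigma S → S → ℕ → Result → List (LaRunElem S) → Prop where
  | accept {A : SubNFA Sigma S} {q : S} {i : ℕ} : q ∈ A.F →
      LAMatchRun w A q i (.successAt i) [.call q i, .succAt i]
  | eps {A : SubNFA Sigma S} {q q' : S} {i : ℕ} {r : Result} {s : List (LaRunElem S)} :
      q ∉ A.F → A.T q = SubTrans.eps q' →
      LAMatchRun w A q' i r s →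
      LAMatchRun w A q i r (.call q i :: s ++ [r.laElem])
  | branchSucc {A : SubNFA Sigma S} {q q' q'' : S} {i i' : ℕ} {s : List (LaRunElem S)} :
      q ∉ A.F → A.T q = SubTrans.branch q' q'' →
      LAMatchRun w A q' i (.successAt i') s →
      LAMatchRun w A q i (.successAt i') (.call q i :: s ++ [LaRunElem.succAt i'])
  | branchFail {A : SubNFA Sigma S} {q q' q'' : S} {i : ℕ} {r : Result}
      {s s' : List (LaRunElem S)} :
      q ∉ A.F → A.T q = SubTrans.branch q' q'' →
      LAMatchRun w A q' i .failure s →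
      LAMatchRun w A q'' i r s' →
      LAMatchRun w A q i r (.call q i :: s ++ s' ++ [r.laElem])
  | charSucc {A : SubNFA Sigma S} {q q' : S} {σ : Sigma} {i : ℕ} {r : Result}
      {s : List (LaRunElem S)} :
      q ∉ A.F → A.T q = SubTrans.char σ q' →
      w[i]? = some σ →
      LAMatchRun w A q' (i + 1) r s →
      LAMatchRun w A q i r (.call q i :: s ++ [r.laElem])
  | charFail {A : SubNFA Sigma S} {q q' : S} {σ : Sigma} {i : ℕ} :
      q ∉ A.F → A.T q = SubTrans.char σ q' →
      w[i]? ≠ some σ →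
      LAMatchRun w A q i .failure [.call q i, .fail]
  | plaSucc {A A' : SubNFA Sigma S} {q q' : S} {i i' : ℕ} {r : Result}
      {s1 s2 : List (LaRunElem S)} :
      q ∉ A.F → A.T q = SubTrans.sub Kind.pla A' q' →
      LAMatchRun w A' A'.q0 i (.successAt i') s1 →
      LAMatchRun w A q' i r s2 →
      LAMatchRun w A q i r (.call q i :: s1 ++ s2 ++ [r.laElem])
  | plaFail {A A' : SubNFA Sigma S} {q q' : S} {i : ℕ} {s1 : List (LaRunElem S)} :
      q ∉ A.F → A.T q = SubTrans.sub Kind.pla A' q' →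
      LAMatchRun w A' A'.q0 i .failure s1 →
      LAMatchRun w A q i .failure (.call q i :: s1 ++ [LaRunElem.fail])
  | atSucc {A A' : SubNFA Sigma S} {q q' : S} {i i' : ℕ} {r : Result}
      {s1 s2 : List (LaRunElem S)} :
      q ∉ A.F → A.T q = SubTrans.sub Kind.at A' q' →
      LAMatchRun w A' A'.q0 i (.successAt i') s1 →
      LAMatchRun w A q' i' r s2 →
      LAMatchRun w A q i r (.call q i :: s1 ++ s2 ++ [r.laElem])
  | atFail {A A' : SubNFA Sigma S} {q q' : S} {i : ℕ} {s1 : List (LaRunElem S)} :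
      q ∉ A.F → A.T q = SubTrans.sub Kind.at A' q' →
      LAMatchRun w A' A'.q0 i .failure s1 →
      LAMatchRun w A q i .failure (.call q i :: s1 ++ [LaRunElem.fail])

/-! ## `Memo-la` -/

/-- Values of the memoization table of `Memo-la`: `Failure` or `Success`. -/
inductive LaVal : Type where
  | success : LaVal
  | failure : LaVal
deriving DecidableEq

/-- Results of `Memo-la`: `SuccessAt i'`, bare `Success`, or `Failure`. -/
inductive LaResult : Type where
  | successAt : ℕ → LaResult
  | success : LaResult
  | failure : LaResult
deriving DecidableEq

def LaVal.toResult : LaVal → LaResult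
  | .success => .success
  | .failure => .failure

def LaResult.elem {S : Type} : LaResult → LaRunElem S
  | .successAt i => .succAt i
  | .success => .succ
  | .failure => .fail

def Result.toLa : Result → LaResult
  | .successAt i => .successAt i
  | .failure => .failure

/-- The final recording of `Memo-la`: `M(q,i) := Success` if the result is
`SuccessAt i'` or `Success`, and `M(q,i) := Failure` if the result is `Failure`. -/
def laRecord [DecidableEq S] (M : S × ℕ → Option LaVal) (q : S) (i : ℕ) (r : LaResult) :
    S × ℕ → Option LaVal :=
  fun p => if p = (q, i) then
    some (match r with | .failure => LaVal.failure | _ => LaVal.success)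
  else M p

/-- Big-step semantics (with resulting memoization table and produced run) of the
memoized backtracking matching algorithm `Memo-la` for la-NFAs:
`MemoLaRun w A q i M M' r s` means the call `Memo-la^M_{A,w}(q, i)` terminates with
result `r`, final memoization table `M'`, and produces the run `s`. The memoization
table is shared between the top-level automaton and all sub-automata. -/
inductive MemoLaRun [DecidableEq S] (w : List Sigma) :
    SubNFA Sigma S → S → ℕ → (S × ℕ → Option LaVal) → (S × ℕ → Option LaVal) →
    LaResult → List (LaRunElem S) → Prop where
  | memoHit {A : SubNFA Sigma S} {q : S} {i : ℕ} {M : S × ℕ → Option LaVal} {v : LaVal} :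
      M (q, i) = some v →
      MemoLaRun w A q i M M v.toResult [.memo q i, v.toResult.elem]
  | accept {A : SubNFA Sigma S} {q : S} {i : ℕ} {M : S × ℕ → Option LaVal} :
      M (q, i) = none → q ∈ A.F →
      MemoLaRun w A q i M (laRecord M q i (.successAt i)) (.successAt i)
        [.call q i, .succAt i]
  | eps {A : SubNFA Sigma S} {q q' : S} {i : ℕ} {M M' : S × ℕ → Option LaVal}
      {r : LaResult} {s : List (LaRunElem S)} :
      M (q, i) = none → q ∉ A.F → A.T q = SubTrans.eps q' →
      MemoLaRun w A q' i M M' r s →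
      MemoLaRun w A q i M (laRecord M' q i r) r (.call q i :: s ++ [r.elem])
  | branchNoFail {A : SubNFA Sigma S} {q q' q'' : S} {i : ℕ}
      {M M' : S × ℕ → Option LaVal} {r : LaResult} {s : List (LaRunElem S)} :
      M (q, i) = none → q ∉ A.F → A.T q = SubTrans.branch q' q'' →
      MemoLaRun w A q' i M M' r s → r ≠ .failure →
      MemoLaRun w A q i M (laRecord M' q i r) r (.call q i :: s ++ [r.elem])
  | branchFail {A : SubNFA Sigma S} {q q' q'' : S} {i : ℕ}
      {M M1 M2 : S × ℕ → Option LaVal} {r : LaResult} {s1 s2 : List (LaRunElem S)} :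
      M (q, i) = none → q ∉ A.F → A.T q = SubTrans.branch q' q'' →
      MemoLaRun w A q' i M M1 .failure s1 →
      MemoLaRun w A q'' i M1 M2 r s2 →
      MemoLaRun w A q i M (laRecord M2 q i r) r (.call q i :: s1 ++ s2 ++ [r.elem])
  | charSucc {A : SubNFA Sigma S} {q q' : S} {σ : Sigma} {i : ℕ}
      {M M' : S × ℕ → Option LaVal} {r : LaResult} {s : List (LaRunElem S)} :
      M (q, i) = none → q ∉ A.F → A.T q = SubTrans.char σ q' →
      w[i]? = some σ →
      MemoLaRun w A q' (i + 1) M M' r s →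
      MemoLaRun w A q i M (laRecord M' q i r) r (.call q i :: s ++ [r.elem])
  | charFail {A : SubNFA Sigma S} {q q' : S} {σ : Sigma} {i : ℕ}
      {M : S × ℕ → Option LaVal} :
      M (q, i) = none → q ∉ A.F → A.T q = SubTrans.char σ q' →
      w[i]? ≠ some σ →
      MemoLaRun w A q i M (laRecord M q i .failure) .failure [.call q i, .fail]
  | plaSucc {A A' : SubNFA Sigma S} {q q' : S} {i : ℕ}
      {M M1 M2 : S × ℕ → Option LaVal} {r1 r : LaResult} {s1 s2 : List (LaRunElem S)} :
      M (q, i) = none → q ∉ A.F → A.T q = SubTrans.sub Kind.pla A' q' →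
      MemoLaRun w A' A'.q0 i M M1 r1 s1 → r1 ≠ .failure →
      MemoLaRun w A q' i M1 M2 r s2 →
      MemoLaRun w A q i M (laRecord M2 q i r) r (.call q i :: s1 ++ s2 ++ [r.elem])
  | plaFail {A A' : SubNFA Sigma S} {q q' : S} {i : ℕ}
      {M M1 : S × ℕ → Option LaVal} {s1 : List (LaRunElem S)} :
      M (q, i) = none → q ∉ A.F → A.T q = SubTrans.sub Kind.pla A' q' →
      MemoLaRun w A' A'.q0 i M M1 .failure s1 →
      MemoLaRun w A q i M (laRecord M1 q i .failure) .failure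
        (.call q i :: s1 ++ [LaRunElem.fail])

/-! ## `Memo-at` -/

/-- Results of `Memo-at`: `SuccessAt(i', K)` with a set `K` of delayed memoization keys,
or `Failure(j)` with a nesting depth `j`. -/
inductive AtResult (S : Type) : Type where
  | successAt : ℕ → Finset (S × ℕ) → AtResult S
  | failure : ℕ → AtResult S

/-- Elements of runs of `Memo-at`: calls `C(q,i)`, memoization-table invocations
`M(q,i)`, and results `S(i')` and `F(j)`. -/
inductive AtRunElem (S : Type) : Type where
  | call : S → ℕ → AtRunElem S
  | memo : S → ℕ → AtRunElem S
  | succ : ℕ → AtRunElem S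
  | fail : ℕ → AtRunElem S
deriving DecidableEq

def AtRunElem.isRet : AtRunElem S → Bool
  | .succ _ => true
  | .fail _ => true
  | _ => false

def AtRunElem.isCall : AtRunElem S → Bool
  | .call _ _ => true
  | .memo _ _ => true
  | _ => false

def atMemoToCall : AtRunElem S → Option (AtRunElem S)
  | .memo q i => some (.call q i)
  | _ => none

def AtResult.elem {S : Type} : AtResult S → AtRunElem S
  | .successAt i _ => .succ i
  | .failure j => .fail j

/-- `f`, converting results of `Memo-at` to results of `Match-(la,at)`. -/
def AtResult.toResult {S : Type} : AtResult S → Result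
  | .successAt i _ => .successAt i
  | .failure _ => .failure

/-- The final step of `Memo-at`: on success, the key `(q,i)` is added to the set of
delayed keys. -/
def atFinal [DecidableEq S] (q : S) (i : ℕ) : AtResult S → AtResult S
  | .successAt i' K => .successAt i' (insert (q, i) K)
  | .failure j => .failure j

/-- The final recording of `Memo-at`: `M(q,i) := Failure(j)` if the result is
`Failure(j)`. -/
def atRecord [DecidableEq S] (M : S × ℕ → Option ℕ) (q : S) (i : ℕ) :
    AtResult S → (S × ℕ → Option ℕ)
  | .failure j => fun p => if p = (q, i) then some j else M p
  | _ => M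

/-- Batch recording `M(k) := Failure(j)` for every `k ∈ K`. -/
def atBatch [DecidableEq S] (M : S × ℕ → Option ℕ) (K : Finset (S × ℕ)) (j : ℕ) :
    S × ℕ → Option ℕ :=
  fun p => if p ∈ K then some j else M p

/-- Big-step semantics (with resulting memoization table and produced run) of the
memoized backtracking matching algorithm `Memo-at` for at-NFAs:
`MemoAtRun A0 w A q i M M' r s` means the call `Memo-at^M_{A0,A,w}(q, i)` (with the
whole automaton `A0` and current sub-automaton `A`) terminates with result `r`, final
memoization table `M'`, and produces the run `s`. -/
inductive MemoAtRun [DecidableEq S] (A0 : SubNFA Sigma S) (w : List Sigma) :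
    SubNFA Sigma S → S → ℕ → (S × ℕ → Option ℕ) → (S × ℕ → Option ℕ) →
    AtResult S → List (AtRunElem S) → Prop where
  | memoHit {A : SubNFA Sigma S} {q : S} {i j : ℕ} {M : S × ℕ → Option ℕ} :
      M (q, i) = some j →
      MemoAtRun A0 w A q i M M (.failure j) [.memo q i, .fail j]
  | accept {A : SubNFA Sigma S} {q : S} {i : ℕ} {M : S × ℕ → Option ℕ} :
      M (q, i) = none → q ∈ A.F →
      MemoAtRun A0 w A q i M M (.successAt i {(q, i)}) [.call q i, .succ i]
  | eps {A : SubNFA Sigma S} {q q' : S} {i : ℕ} {M M' : S × ℕ → Option ℕ}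
      {r : AtResult S} {s : List (AtRunElem S)} :
      M (q, i) = none → q ∉ A.F → A.T q = SubTrans.eps q' →
      MemoAtRun A0 w A q' i M M' r s →
      MemoAtRun A0 w A q i M (atRecord M' q i r) (atFinal q i r)
        (.call q i :: s ++ [r.elem])
  | branchNoBT {A : SubNFA Sigma S} {q q' q'' : S} {i : ℕ} {M M' : S × ℕ → Option ℕ}
      {r : AtResult S} {s : List (AtRunElem S)} :
      M (q, i) = none → q ∉ A.F → A.T q = SubTrans.branch q' q'' →
      MemoAtRun A0 w A q' i M M' r s →
      (∀ j, r = AtResult.failure j → j ≠ A0.nu q) →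
      MemoAtRun A0 w A q i M (atRecord M' q i r) (atFinal q i r)
        (.call q i :: s ++ [r.elem])
  | branchBTSucc {A : SubNFA Sigma S} {q q' q'' : S} {i i'' : ℕ} {K : Finset (S × ℕ)}
      {M M1 M2 : S × ℕ → Option ℕ} {s1 s2 : List (AtRunElem S)} :
      M (q, i) = none → q ∉ A.F → A.T q = SubTrans.branch q' q'' →
      MemoAtRun A0 w A q' i M M1 (.failure (A0.nu q)) s1 →
      MemoAtRun A0 w A q'' i M1 M2 (.successAt i'' K) s2 →
      MemoAtRun A0 w A q i M M2 (atFinal q i (.successAt i'' K))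
        (.call q i :: s1 ++ s2 ++ [AtRunElem.succ i''])
  | branchBTFail {A : SubNFA Sigma S} {q q' q'' : S} {i j' : ℕ}
      {M M1 M2 : S × ℕ → Option ℕ} {s1 s2 : List (AtRunElem S)} :
      M (q, i) = none → q ∉ A.F → A.T q = SubTrans.branch q' q'' →
      MemoAtRun A0 w A q' i M M1 (.failure (A0.nu q)) s1 →
      MemoAtRun A0 w A q'' i M1 M2 (.failure j') s2 →
      MemoAtRun A0 w A q i M (atRecord M2 q i (.failure (min (A0.nu q) j')))
        (.failure (min (A0.nu q) j'))
        (.call q i :: s1 ++ s2 ++ [AtRunElem.fail (min (A0.nu q) j')])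
  | charSucc {A : SubNFA Sigma S} {q q' : S} {σ : Sigma} {i : ℕ}
      {M M' : S × ℕ → Option ℕ} {r : AtResult S} {s : List (AtRunElem S)} :
      M (q, i) = none → q ∉ A.F → A.T q = SubTrans.char σ q' →
      w[i]? = some σ →
      MemoAtRun A0 w A q' (i + 1) M M' r s →
      MemoAtRun A0 w A q i M (atRecord M' q i r) (atFinal q i r)
        (.call q i :: s ++ [r.elem])
  | charFail {A : SubNFA Sigma S} {q q' : S} {σ : Sigma} {i : ℕ}
      {M : S × ℕ → Option ℕ} :
      M (q, i) = none → q ∉ A.F → A.T q = SubTrans.char σ q' →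
      w[i]? ≠ some σ →
      MemoAtRun A0 w A q i M (atRecord M q i (.failure (A0.nu q)))
        (.failure (A0.nu q)) [.call q i, .fail (A0.nu q)]
  | subSuccSucc {A A' : SubNFA Sigma S} {q q' : S} {i i' i'' : ℕ}
      {K' K'' : Finset (S × ℕ)} {M M1 M2 : S × ℕ → Option ℕ}
      {s1 s2 : List (AtRunElem S)} :
      M (q, i) = none → q ∉ A.F → A.T q = SubTrans.sub Kind.at A' q' →
      MemoAtRun A0 w A' A'.q0 i M M1 (.successAt i' K') s1 →
      MemoAtRun A0 w A q' i' M1 M2 (.successAt i'' K'') s2 →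
      MemoAtRun A0 w A q i M M2 (atFinal q i (.successAt i'' (K' ∪ K'')))
        (.call q i :: s1 ++ s2 ++ [AtRunElem.succ i''])
  | subSuccFail {A A' : SubNFA Sigma S} {q q' : S} {i i' j : ℕ} {K' : Finset (S × ℕ)}
      {M M1 M2 : S × ℕ → Option ℕ} {s1 s2 : List (AtRunElem S)} :
      M (q, i) = none → q ∉ A.F → A.T q = SubTrans.sub Kind.at A' q' →
      MemoAtRun A0 w A' A'.q0 i M M1 (.successAt i' K') s1 →
      MemoAtRun A0 w A q' i' M1 M2 (.failure j) s2 →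
      MemoAtRun A0 w A q i M (atRecord (atBatch M2 K' j) q i (.failure j)) (.failure j)
        (.call q i :: s1 ++ s2 ++ [AtRunElem.fail j])
  | subFailHigh {A A' : SubNFA Sigma S} {q q' : S} {i j : ℕ}
      {M M1 : S × ℕ → Option ℕ} {s1 : List (AtRunElem S)} :
      M (q, i) = none → q ∉ A.F → A.T q = SubTrans.sub Kind.at A' q' →
      MemoAtRun A0 w A' A'.q0 i M M1 (.failure j) s1 →
      A0.nu q < j →
      MemoAtRun A0 w A q i M (atRecord M1 q i (.failure (A0.nu q)))
        (.failure (A0.nu q)) (.call q i :: s1 ++ [AtRunElem.fail (A0.nu q)])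
  | subFailLow {A A' : SubNFA Sigma S} {q q' : S} {i j : ℕ}
      {M M1 : S × ℕ → Option ℕ} {s1 : List (AtRunElem S)} :
      M (q, i) = none → q ∉ A.F → A.T q = SubTrans.sub Kind.at A' q' →
      MemoAtRun A0 w A' A'.q0 i M M1 (.failure j) s1 →
      j ≤ A0.nu q →
      MemoAtRun A0 w A q i M (atRecord M1 q i (.failure j)) (.failure j)
        (.call q i :: s1 ++ [AtRunElem.fail j])

/-! ## The combined algorithm `Memo-(la,at)` -/

/-- Values of the memoization table of `Memo-(la,at)`: `Success` or `Failure(j)`. -/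
inductive LaAtVal : Type where
  | success : LaAtVal
  | failure : ℕ → LaAtVal

/-- Results of `Memo-(la,at)`: `SuccessAt(i', K)`, bare `Success`, or `Failure(j)`. -/
inductive LaAtResult (S : Type) : Type where
  | successAt : ℕ → Finset (S × ℕ) → LaAtResult S
  | success : LaAtResult S
  | failure : ℕ → LaAtResult S

def LaAtVal.toResult {S : Type} : LaAtVal → LaAtResult S
  | .success => .success
  | .failure j => .failure j

/-- `f`, converting results of `Memo-(la,at)` to results of `Match-(la,at)`
(undefined on the bare value `Success`). -/
def LaAtResult.toResult? {S : Type} : LaAtResult S → Option Result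
  | .successAt i _ => some (.successAt i)
  | .success => none
  | .failure _ => some .failure

def laAtFinal [DecidableEq S] (q : S) (i : ℕ) : LaAtResult S → LaAtResult S
  | .successAt i' K => .successAt i' (insert (q, i) K)
  | r => r

def laAtRecord [DecidableEq S] (M : S × ℕ → Option LaAtVal) (q : S) (i : ℕ) :
    LaAtResult S → (S × ℕ → Option LaAtVal)
  | .successAt _ _ => M
  | .success => fun p => if p = (q, i) then some LaAtVal.success else M p
  | .failure j => fun p => if p = (q, i) then some (LaAtVal.failure j) else M p

def laAtBatch [DecidableEq S] (M : S × ℕ → Option LaAtVal) (K : Finset (S × ℕ))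
    (v : LaAtVal) : S × ℕ → Option LaAtVal :=
  fun p => if p ∈ K then some v else M p

/-- Big-step semantics (with resulting memoization table and the number of recursive
calls made) of the combined memoized backtracking matching algorithm `Memo-(la,at)`:
`MemoLaAtRun w A0 A q i M M' r n` means the call `Memo-(la,at)^M_{A0,A,w}(q, i)`
terminates with result `r`, final memoization table `M'`, making `n` calls in total.
On a positive look-ahead transition, the sub-automaton becomes the new whole automaton
(so nesting depths of atomic grouping are reset by look-around operators). -/
inductive MemoLaAtRun [DecidableEq S] (w : List Sigma) :
    SubNFA Sigma S → SubNFA Sigma S → S → ℕ →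
    (S × ℕ → Option LaAtVal) → (S × ℕ → Option LaAtVal) → LaAtResult S → ℕ → Prop where
  | memoHit {A0 A : SubNFA Sigma S} {q : S} {i : ℕ} {M : S × ℕ → Option LaAtVal}
      {v : LaAtVal} :
      M (q, i) = some v →
      MemoLaAtRun w A0 A q i M M v.toResult 1
  | accept {A0 A : SubNFA Sigma S} {q : S} {i : ℕ} {M : S × ℕ → Option LaAtVal} :
      M (q, i) = none → q ∈ A.F →
      MemoLaAtRun w A0 A q i M M (.successAt i {(q, i)}) 1
  | eps {A0 A : SubNFA Sigma S} {q q' : S} {i : ℕ} {M M' : S × ℕ → Option LaAtVal}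
      {r : LaAtResult S} {n : ℕ} :
      M (q, i) = none → q ∉ A.F → A.T q = SubTrans.eps q' →
      MemoLaAtRun w A0 A q' i M M' r n →
      MemoLaAtRun w A0 A q i M (laAtRecord M' q i (laAtFinal q i r)) (laAtFinal q i r)
        (n + 1)
  | branchNoBT {A0 A : SubNFA Sigma S} {q q' q'' : S} {i : ℕ}
      {M M' : S × ℕ → Option LaAtVal} {r : LaAtResult S} {n : ℕ} :
      M (q, i) = none → q ∉ A.F → A.T q = SubTrans.branch q' q'' →
      MemoLaAtRun w A0 A q' i M M' r n →
      (∀ j, r = LaAtResult.failure j → j ≠ A0.nu q) →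
      MemoLaAtRun w A0 A q i M (laAtRecord M' q i (laAtFinal q i r)) (laAtFinal q i r)
        (n + 1)
  | branchBTFail {A0 A : SubNFA Sigma S} {q q' q'' : S} {i j' : ℕ}
      {M M1 M2 : S × ℕ → Option LaAtVal} {n1 n2 : ℕ} :
      M (q, i) = none → q ∉ A.F → A.T q = SubTrans.branch q' q'' →
      MemoLaAtRun w A0 A q' i M M1 (.failure (A0.nu q)) n1 →
      MemoLaAtRun w A0 A q'' i M1 M2 (.failure j') n2 →
      MemoLaAtRun w A0 A q i M
        (laAtRecord M2 q i (.failure (min (A0.nu q) j')))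
        (.failure (min (A0.nu q) j')) (n1 + n2 + 1)
  | branchBTOther {A0 A : SubNFA Sigma S} {q q' q'' : S} {i : ℕ}
      {M M1 M2 : S × ℕ → Option LaAtVal} {r : LaAtResult S} {n1 n2 : ℕ} :
      M (q, i) = none → q ∉ A.F → A.T q = SubTrans.branch q' q'' →
      MemoLaAtRun w A0 A q' i M M1 (.failure (A0.nu q)) n1 →
      MemoLaAtRun w A0 A q'' i M1 M2 r n2 →
      (∀ j, r ≠ LaAtResult.failure j) →
      MemoLaAtRun w A0 A q i M (laAtRecord M2 q i (laAtFinal q i r)) (laAtFinal q i r)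
        (n1 + n2 + 1)
  | charSucc {A0 A : SubNFA Sigma S} {q q' : S} {σ : Sigma} {i : ℕ}
      {M M' : S × ℕ → Option LaAtVal} {r : LaAtResult S} {n : ℕ} :
      M (q, i) = none → q ∉ A.F → A.T q = SubTrans.char σ q' →
      w[i]? = some σ →
      MemoLaAtRun w A0 A q' (i + 1) M M' r n →
      MemoLaAtRun w A0 A q i M (laAtRecord M' q i (laAtFinal q i r)) (laAtFinal q i r)
        (n + 1)
  | charFail {A0 A : SubNFA Sigma S} {q q' : S} {σ : Sigma} {i : ℕ}
      {M : S × ℕ → Option LaAtVal} :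
      M (q, i) = none → q ∉ A.F → A.T q = SubTrans.char σ q' →
      w[i]? ≠ some σ →
      MemoLaAtRun w A0 A q i M (laAtRecord M q i (.failure (A0.nu q)))
        (.failure (A0.nu q)) 1
  | plaSuccAt {A0 A A' : SubNFA Sigma S} {q q' : S} {i i' : ℕ} {K' : Finset (S × ℕ)}
      {M M1 M2 : S × ℕ → Option LaAtVal} {r : LaAtResult S} {n1 n2 : ℕ} :
      M (q, i) = none → q ∉ A.F → A.T q = SubTrans.sub Kind.pla A' q' →
      MemoLaAtRun w A' A' A'.q0 i M M1 (.successAt i' K') n1 →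
      MemoLaAtRun w A0 A q' i (laAtBatch M1 K' LaAtVal.success) M2 r n2 →
      MemoLaAtRun w A0 A q i M (laAtRecord M2 q i (laAtFinal q i r)) (laAtFinal q i r)
        (n1 + n2 + 1)
  | plaBare {A0 A A' : SubNFA Sigma S} {q q' : S} {i : ℕ}
      {M M1 M2 : S × ℕ → Option LaAtVal} {r : LaAtResult S} {n1 n2 : ℕ} :
      M (q, i) = none → q ∉ A.F → A.T q = SubTrans.sub Kind.pla A' q' →
      MemoLaAtRun w A' A' A'.q0 i M M1 .success n1 →
      MemoLaAtRun w A0 A q' i M1 M2 r n2 →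
      MemoLaAtRun w A0 A q i M (laAtRecord M2 q i (laAtFinal q i r)) (laAtFinal q i r)
        (n1 + n2 + 1)
  | plaFail {A0 A A' : SubNFA Sigma S} {q q' : S} {i j : ℕ}
      {M M1 : S × ℕ → Option LaAtVal} {n1 : ℕ} :
      M (q, i) = none → q ∉ A.F → A.T q = SubTrans.sub Kind.pla A' q' →
      MemoLaAtRun w A' A' A'.q0 i M M1 (.failure j) n1 →
      MemoLaAtRun w A0 A q i M (laAtRecord M1 q i (.failure (A0.nu q)))
        (.failure (A0.nu q)) (n1 + 1)
  | atSuccSucc {A0 A A' : SubNFA Sigma S} {q q' : S} {i i' i'' : ℕ}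
      {K' K'' : Finset (S × ℕ)} {M M1 M2 : S × ℕ → Option LaAtVal} {n1 n2 : ℕ} :
      M (q, i) = none → q ∉ A.F → A.T q = SubTrans.sub Kind.at A' q' →
      MemoLaAtRun w A0 A' A'.q0 i M M1 (.successAt i' K') n1 →
      MemoLaAtRun w A0 A q' i' M1 M2 (.successAt i'' K'') n2 →
      MemoLaAtRun w A0 A q i M M2
        (laAtFinal q i (.successAt i'' (K' ∪ K''))) (n1 + n2 + 1)
  | atSuccBare {A0 A A' : SubNFA Sigma S} {q q' : S} {i i' : ℕ} {K' : Finset (S × ℕ)}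
      {M M1 M2 : S × ℕ → Option LaAtVal} {n1 n2 : ℕ} :
      M (q, i) = none → q ∉ A.F → A.T q = SubTrans.sub Kind.at A' q' →
      MemoLaAtRun w A0 A' A'.q0 i M M1 (.successAt i' K') n1 →
      MemoLaAtRun w A0 A q' i' M1 M2 .success n2 →
      MemoLaAtRun w A0 A q i M
        (laAtRecord (laAtBatch M2 K' LaAtVal.success) q i .success) .success
        (n1 + n2 + 1)
  | atSuccFail {A0 A A' : SubNFA Sigma S} {q q' : S} {i i' j : ℕ} {K' : Finset (S × ℕ)}
      {M M1 M2 : S × ℕ → Option LaAtVal} {n1 n2 : ℕ} :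
      M (q, i) = none → q ∉ A.F → A.T q = SubTrans.sub Kind.at A' q' →
      MemoLaAtRun w A0 A' A'.q0 i M M1 (.successAt i' K') n1 →
      MemoLaAtRun w A0 A q' i' M1 M2 (.failure j) n2 →
      MemoLaAtRun w A0 A q i M
        (laAtRecord (laAtBatch M2 K' (LaAtVal.failure j)) q i (.failure j))
        (.failure j) (n1 + n2 + 1)
  | atBare {A0 A A' : SubNFA Sigma S} {q q' : S} {i : ℕ}
      {M M1 : S × ℕ → Option LaAtVal} {n1 : ℕ} :
      M (q, i) = none → q ∉ A.F → A.T q = SubTrans.sub Kind.at A' q' →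
      MemoLaAtRun w A0 A' A'.q0 i M M1 .success n1 →
      MemoLaAtRun w A0 A q i M (laAtRecord M1 q i .success) .success (n1 + 1)
  | atFailHigh {A0 A A' : SubNFA Sigma S} {q q' : S} {i j : ℕ}
      {M M1 : S × ℕ → Option LaAtVal} {n1 : ℕ} :
      M (q, i) = none → q ∉ A.F → A.T q = SubTrans.sub Kind.at A' q' →
      MemoLaAtRun w A0 A' A'.q0 i M M1 (.failure j) n1 →
      A0.nu q < j →
      MemoLaAtRun w A0 A q i M (laAtRecord M1 q i (.failure (A0.nu q)))
        (.failure (A0.nu q)) (n1 + 1)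
  | atFailLow {A0 A A' : SubNFA Sigma S} {q q' : S} {i j : ℕ}
      {M M1 : S × ℕ → Option LaAtVal} {n1 : ℕ} :
      M (q, i) = none → q ∉ A.F → A.T q = SubTrans.sub Kind.at A' q' →
      MemoLaAtRun w A0 A' A'.q0 i M M1 (.failure j) n1 →
      j ≤ A0.nu q →
      MemoLaAtRun w A0 A q i M (laAtRecord M1 q i (.failure j)) (.failure j) (n1 + 1)


/-!
Matching without memoization is deterministic, so the length of its run is a well-defined cost of
each key `(q, i)`. The table of `Memo-at` is sound: an entry `M(q, i) = Failure(j)` means that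
matching from `(q, i)`, resumed in the automata enclosing that of `q`, fails at depth `j`.
Consequently `Memo-at` only makes calls below `(q, i)` that matching without memoization makes
there too. These are cheaper than `(q, i)`, so `(q, i)` is not among them.
-/

section Runs

variable {isRet : α → Bool} {P : α → List α → Prop} {s t b : List α} {c e : α} {ℓ m n : ℕ}

theorem phiAux_of_not_isRet (hs : s[ℓ]? = some c) (hc : isRet c = false) :
    phiAux isRet s ℓ n = phiAux isRet s (ℓ + 1) (n + 1) := by
  rw [phiAux]
  split <;> simp_all

theorem phiAux_of_isRet (hs : s[ℓ]? = some e) (he : isRet e = true) :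
    phiAux isRet s ℓ n = if n ≤ 1 then some ℓ else phiAux isRet s (ℓ + 1) (n - 1) := by
  rw [phiAux]
  split <;> simp_all

theorem drop_add_length_of_drop_eq (h : s.drop ℓ = b ++ t) : s.drop (ℓ + b.length) = t := by
  rw [← List.drop_drop, h, List.drop_left]

theorem getElem?_add_length_of_drop_eq (h : s.drop ℓ = b ++ e :: t) :
    s[ℓ + b.length]? = some e := by
  rw [← List.head?_drop, drop_add_length_of_drop_eq h, List.head?_cons]

/-- Runs that are concatenations of blocks `c b e`, where `c` is a call, `e` its result, and the
body `b` is again such a run and satisfies `P c b`. -/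
inductive WellNested (isRet : α → Bool) (P : α → List α → Prop) : List α → Prop
  | nil : WellNested isRet P []
  | append {s t : List α} :
      WellNested isRet P s → WellNested isRet P t → WellNested isRet P (s ++ t)
  | wrap {c e : α} {b : List α} : isRet c = false → isRet e = true → WellNested isRet P b →
      P c b → WellNested isRet P (c :: b ++ [e])

namespace WellNested

theorem phiAux_skip (hb : WellNested isRet P b) (hn : 1 ≤ n) (hs : s.drop ℓ = b ++ t) :
    phiAux isRet s ℓ n = phiAux isRet s (ℓ + b.length) n := by
  induction hb generalizing ℓ n t with
  | nil => rfl
  | @append u v _ _ ihu ihv =>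
    rw [List.append_assoc] at hs
    rw [ihu hn hs, ihv hn (drop_add_length_of_drop_eq hs), List.length_append, Nat.add_assoc]
  | @wrap c e b hc he _ _ ih =>
    replace hs : s.drop ℓ = c :: (b ++ e :: t) := by simpa using hs
    have hc_at : s[ℓ]? = some c := getElem?_add_length_of_drop_eq (b := []) hs
    have hbody : s.drop (ℓ + 1) = b ++ e :: t := drop_add_length_of_drop_eq (b := [c]) hs
    rw [phiAux_of_not_isRet hc_at hc, ih (Nat.le_add_left 1 n) hbody,
      phiAux_of_isRet (getElem?_add_length_of_drop_eq hbody) he, if_neg (by omega),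
      Nat.add_sub_cancel]
    congr 1
    simp only [List.length_append, List.length_cons, List.length_nil]
    omega

theorem exists_block (hs : WellNested isRet P s) (hc_at : s[ℓ]? = some c) (hc : isRet c = false) :
    ∃ b e t, s.drop ℓ = c :: b ++ e :: t ∧ isRet e = true ∧ WellNested isRet P b ∧ P c b := by
  induction hs generalizing ℓ with
  | nil => simp at hc_at
  | @append u v _ _ ihu ihv =>
    rcases lt_or_ge ℓ u.length with hℓ | hℓ
    · rw [List.getElem?_append_left hℓ] at hc_at
      obtain ⟨b, e, t, hdrop, hblock⟩ := ihu hc_at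
      exact ⟨b, e, t ++ v, by rw [List.drop_append_of_le_length hℓ.le, hdrop]; simp, hblock⟩
    · rw [List.getElem?_append_right hℓ] at hc_at
      obtain ⟨b, e, t, hdrop, hblock⟩ := ihv hc_at
      exact ⟨b, e, t, by rw [List.drop_append, List.drop_eq_nil_of_le hℓ, List.nil_append, hdrop],
        hblock⟩
  | @wrap c' e' b' _ he' hb' hP ih =>
    rcases ℓ with _ | k
    · obtain rfl : c' = c := by simpa using hc_at
      exact ⟨b', e', [], rfl, he', hb', hP⟩
    · rw [List.cons_append, List.getElem?_cons_succ] at hc_at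
      rcases lt_or_ge k b'.length with hk | hk
      · rw [List.getElem?_append_left hk] at hc_at
        obtain ⟨b, e, t, hdrop, hblock⟩ := ih hc_at
        refine ⟨b, e, t ++ [e'], ?_, hblock⟩
        rw [List.cons_append, List.drop_succ_cons, List.drop_append_of_le_length hk.le, hdrop]
        simp
      · rw [List.getElem?_append_right hk, List.getElem?_singleton] at hc_at
        have : e' = c := by split at hc_at <;> simp_all
        simp_all

theorem exists_body_of_phi_eq_some (hs : WellNested isRet P s) (hc_at : s[ℓ]? = some c)
    (hc : isRet c = false) (hφ : phi isRet s ℓ = some m) :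
    ∃ b, P c b ∧ ∀ ℓ' x, ℓ + 1 ≤ ℓ' → ℓ' ≤ m → s[ℓ']? = some x → x ∈ b ∨ isRet x = true := by
  obtain ⟨b, e, t, hdrop, he, hb, hP⟩ := hs.exists_block hc_at hc
  have hbody : s.drop (ℓ + 1) = b ++ e :: t := drop_add_length_of_drop_eq (b := [c]) hdrop
  have hm : ℓ + 1 + b.length = m := by
    rwa [phi, phiAux_of_not_isRet hc_at hc, hb.phiAux_skip le_rfl hbody,
      phiAux_of_isRet (getElem?_add_length_of_drop_eq hbody) he, if_pos le_rfl,
      Option.some.injEq] at hφ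
  refine ⟨b, hP, fun ℓ' x hℓ' hℓ'm hx => ?_⟩
  obtain ⟨k, rfl⟩ := Nat.exists_eq_add_of_le hℓ'
  rcases lt_or_eq_of_le (show k ≤ b.length by omega) with hk | rfl
  · rw [← List.getElem?_drop, hbody, List.getElem?_append_left hk] at hx
    exact .inl (List.mem_of_getElem? hx)
  · rw [getElem?_add_length_of_drop_eq hbody, Option.some.injEq] at hx
    exact .inr (hx ▸ he)

end WellNested

end Runs

section Components

/-- The return frames of an atomic call stack, innermost first: `(B, q)` says that once the
sub-automaton being run has succeeded, `B` resumes in state `q`. -/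
abbrev Stack (Sigma S : Type) : Type := List (SubNFA Sigma S × S)

mutual
/-- The automata occurring in `A`, each with the stack of return frames under which the matching
of `A` with stack `κ` runs it. As in `SubNFA.compsD`, only `at`-transitions are counted. -/
def SubNFA.stackedComps (κ : Stack Sigma S) :
    SubNFA Sigma S → List (SubNFA Sigma S × Stack Sigma S)
  | .mk Q q0 F T =>
    (.mk Q q0 F T, κ) :: Q.flatMap (fun q => SubTrans.stackedComps (.mk Q q0 F T) κ (T q))

/-- The stacked components below a transition of `A`, for `A` running under the stack `κ`. -/
def SubTrans.stackedComps (A : SubNFA Sigma S) (κ : Stack Sigma S) :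
    SubTrans Sigma S → List (SubNFA Sigma S × Stack Sigma S)
  | .sub k A' q' => SubNFA.stackedComps (if k = Kind.at then (A, q') :: κ else κ) A'
  | _ => []
end

theorem SubNFA.stackedComps_eq (κ : Stack Sigma S) (A : SubNFA Sigma S) :
    A.stackedComps κ = (A, κ) :: A.Q.flatMap fun q => (A.T q).stackedComps A κ := by
  cases A
  rw [SubNFA.stackedComps]
  rfl

theorem SubNFA.self_mem_stackedComps (κ : Stack Sigma S) (A : SubNFA Sigma S) :
    (A, κ) ∈ A.stackedComps κ := by
  rw [stackedComps_eq]
  exact List.mem_cons_self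

mutual
theorem SubNFA.map_length_stackedComps (κ : Stack Sigma S) : (A : SubNFA Sigma S) →
    (A.stackedComps κ).map (Prod.map id List.length) =
      A.compsD.map (Prod.map id (· + κ.length))
  | .mk Q q0 F T => by
    rw [SubNFA.stackedComps, SubNFA.compsD, List.map_cons, List.map_cons, List.map_flatMap,
      List.map_flatMap]
    congr 1
    · simp only [Prod.map, Nat.zero_add]
    · exact congrArg (Q.flatMap ·) (funext fun q =>
        SubTrans.map_length_stackedComps (.mk Q q0 F T) κ (T q))

theorem SubTrans.map_length_stackedComps (A : SubNFA Sigma S) (κ : Stack Sigma S) :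
    (t : SubTrans Sigma S) → (t.stackedComps A κ).map (Prod.map id List.length) =
      t.subCompsD.map (Prod.map id (· + κ.length))
  | .sub k A' q' => by
    rw [SubTrans.stackedComps, SubNFA.map_length_stackedComps, SubTrans.subCompsD, List.map_map]
    congr 1
    funext p
    by_cases hk : k = Kind.at
    · simp [hk, Prod.map, Nat.add_assoc, Nat.add_comm 1]
    · simp [hk, Prod.map]
  | .eps _ => by simp [SubTrans.stackedComps, SubTrans.subCompsD]
  | .branch _ _ => by simp [SubTrans.stackedComps, SubTrans.subCompsD]
  | .char _ _ => by simp [SubTrans.stackedComps, SubTrans.subCompsD]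
end

mutual
theorem SubNFA.push_mem_stackedComps {B A' : SubNFA Sigma S} {κ : Stack Sigma S} {q q' : S}
    (hq : q ∈ B.Q) (hT : B.T q = .sub .at A' q') (κ₀ : Stack Sigma S) : (A : SubNFA Sigma S) →
    (B, κ) ∈ A.stackedComps κ₀ → (A', (B, q') :: κ) ∈ A.stackedComps κ₀
  | .mk Q q0 F T => fun hB => by
    rw [SubNFA.stackedComps] at hB ⊢
    refine List.mem_cons_of_mem _ (List.mem_flatMap.2 ?_)
    rcases List.mem_cons.1 hB with hB | hB
    · cases hB
      refine ⟨q, hq, ?_⟩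
      change T q = _ at hT
      rw [hT, SubTrans.stackedComps, if_pos rfl]
      exact A'.self_mem_stackedComps _
    · obtain ⟨p, hp, hB⟩ := List.mem_flatMap.1 hB
      exact ⟨p, hp, SubTrans.push_mem_stackedComps hq hT _ κ₀ (T p) hB⟩

theorem SubTrans.push_mem_stackedComps {B A' : SubNFA Sigma S} {κ : Stack Sigma S} {q q' : S}
    (hq : q ∈ B.Q) (hT : B.T q = .sub .at A' q') (A : SubNFA Sigma S) (κ₀ : Stack Sigma S) :
    (t : SubTrans Sigma S) → (B, κ) ∈ t.stackedComps A κ₀ →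
      (A', (B, q') :: κ) ∈ t.stackedComps A κ₀
  | .sub _ A₁ _ => fun hB => by
    rw [SubTrans.stackedComps] at hB ⊢
    exact SubNFA.push_mem_stackedComps hq hT _ A₁ hB
  | .eps _ | .branch _ _ | .char _ _ => fun hB => by simp [SubTrans.stackedComps] at hB
end

theorem eq_of_mem_of_nodup_flatMap {β γ : Type*} {l : List β} {f : β → List γ}
    (h : (l.flatMap f).Nodup) {x y : β} (hx : x ∈ l) (hy : y ∈ l) {c : γ} (hcx : c ∈ f x)
    (hcy : c ∈ f y) : x = y := by
  by_contra hne
  have : Std.Symm (Function.onFun (List.Disjoint (α := γ)) f) := ⟨fun _ _ => List.Disjoint.symm⟩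
  exact (List.nodup_flatMap.1 h).2.forall hx hy hne hcx hcy

theorem sum_map_ite_mem_of_nodup_flatMap {β γ M : Type*} [DecidableEq γ] [AddMonoid M]
    {l : List β} {f : β → List γ} (g : β → M) (h : (l.flatMap f).Nodup) {c : γ} {x : β}
    (hx : x ∈ l) (hc : c ∈ f x) : (l.map fun y => if c ∈ f y then g y else 0).sum = g x := by
  induction l with
  | nil => cases hx
  | cons a l ih =>
    have hl : (l.flatMap f).Nodup := (List.nodup_append.1 h).2.1
    rw [List.map_cons, List.sum_cons]
    rcases List.mem_cons.1 hx with rfl | hxl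
    · have hdisj : ∀ y ∈ l, c ∉ f y := fun y hy hcy =>
        (List.nodup_append.1 h).2.2 c hc c (List.mem_flatMap.2 ⟨y, hy, hcy⟩) rfl
      have hzero : (l.map fun y => if c ∈ f y then g y else 0).sum = 0 :=
        List.sum_eq_zero fun n hn => by
          obtain ⟨y, hy, rfl⟩ := List.mem_map.1 hn
          exact if_neg (hdisj y hy)
      rw [if_pos hc, hzero, add_zero]
    · have hca : c ∉ f a := fun hca =>
        (List.nodup_append.1 h).2.2 c hca c (List.mem_flatMap.2 ⟨x, hxl, hc⟩) rfl
      rw [if_neg hca, zero_add, ih hl hxl]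

theorem SubNFA.compsD_eq_map_stackedComps (A : SubNFA Sigma S) :
    A.compsD = (A.stackedComps []).map (Prod.map id List.length) := by
  rw [map_length_stackedComps]
  exact (List.map_id _).symm

theorem SubNFA.allStates_eq_flatMap_stackedComps (A : SubNFA Sigma S) :
    A.allStates = (A.stackedComps []).flatMap fun p => p.1.Q := by
  rw [allStates, comps, compsD_eq_map_stackedComps, List.map_map, List.flatMap_map]
  rfl

/-- The states to which a transition leads within its own automaton. -/
def SubTrans.targets : SubTrans Sigma S → List S
  | .eps q' | .char _ q' | .sub _ _ q' => [q']
  | .branch q' q'' => [q', q'']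

/-- `q` is a top-level state of the automaton `A`, which `A0` runs under the stack `κ`. -/
structure SubNFA.HasStateAt (A0 A : SubNFA Sigma S) (κ : Stack Sigma S) (q : S) : Prop where
  mem_stackedComps : (A, κ) ∈ A0.stackedComps []
  mem_Q : q ∈ A.Q

namespace SubNFA.HasStateAt

variable {A0 A A' : SubNFA Sigma S} {κ κ' : Stack Sigma S} {q q' : S}

theorem unique (hN : A0.allStates.Nodup) (h : A0.HasStateAt A κ q)
    (h' : A0.HasStateAt A' κ' q) : A = A' ∧ κ = κ' := by
  rw [allStates_eq_flatMap_stackedComps] at hN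
  exact Prod.mk.inj
    (eq_of_mem_of_nodup_flatMap hN h.mem_stackedComps h'.mem_stackedComps h.mem_Q h'.mem_Q)

theorem nu_eq_length [DecidableEq S] (hN : A0.allStates.Nodup) (h : A0.HasStateAt A κ q) :
    A0.nu q = κ.length := by
  rw [allStates_eq_flatMap_stackedComps] at hN
  rw [nu, compsD_eq_map_stackedComps, List.map_map]
  exact sum_map_ite_mem_of_nodup_flatMap (fun p => p.2.length) hN h.mem_stackedComps h.mem_Q

theorem localOK (hWF : A0.WF) (hA : (A, κ) ∈ A0.stackedComps []) : A.LocalOK := by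
  refine hWF.1 A ?_
  rw [comps, compsD_eq_map_stackedComps, List.map_map]
  exact List.mem_map_of_mem hA

theorem initial (hWF : A0.WF) : A0.HasStateAt A0 [] A0.q0 :=
  have hA := A0.self_mem_stackedComps []
  ⟨hA, (localOK hWF hA).1⟩

theorem target {t : SubTrans Sigma S} (hWF : A0.WF) (h : A0.HasStateAt A κ q) (hF : q ∉ A.F)
    (hT : A.T q = t) (hq' : q' ∈ t.targets) : A0.HasStateAt A κ q' := by
  refine ⟨h.mem_stackedComps, ?_⟩
  have hlocal := (localOK hWF h.mem_stackedComps).2.2 q h.mem_Q hF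
  cases t <;> grind [SubTrans.targets]

theorem push (hWF : A0.WF) (h : A0.HasStateAt A κ q) (hT : A.T q = .sub .at A' q') :
    A0.HasStateAt A' ((A, q') :: κ) A'.q0 :=
  have hA' := push_mem_stackedComps h.mem_Q hT [] A0 h.mem_stackedComps
  ⟨hA', (localOK hWF hA').1⟩

end SubNFA.HasStateAt

end Components

section Soundness

variable {A0 A : SubNFA Sigma S} {w : List Sigma} {κ : Stack Sigma S} {q : S} {i j : ℕ}

theorem LAMatchRun.det {r r' : Result} {s s' : List (LaRunElem S)}
    (h : LAMatchRun w A q i r s) (h' : LAMatchRun w A q i r' s') : r = r' ∧ s = s' := by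
  induction h generalizing r' s' <;> cases h' <;> grind

/-- `FailsAt w κ ρ j`: if an automaton running under the stack `κ` returns `ρ`, and matching without
memoization then resumes the frames of `κ` one after the other, the first automaton to fail is the
one at nesting depth `j`. -/
inductive FailsAt (w : List Sigma) : Stack Sigma S → Result → ℕ → Prop
  | failure (κ : Stack Sigma S) : FailsAt w κ .failure κ.length
  | resume {A : SubNFA Sigma S} {q : S} {κ : Stack Sigma S} {i j : ℕ} {ρ : Result}
      {t : List (LaRunElem S)} :
      LAMatchRun w A q i ρ t → FailsAt w κ ρ j → FailsAt w ((A, q) :: κ) (.successAt i) j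

namespace FailsAt

theorem le_length {ρ : Result} (h : FailsAt w κ ρ j) : j ≤ κ.length := by
  induction h with
  | failure => exact le_rfl
  | resume _ _ ih => exact Nat.le_succ_of_le ih

theorem eq_failure {ρ : Result} (h : FailsAt w κ ρ j) (hj : κ.length ≤ j) : ρ = .failure := by
  cases h with
  | failure => rfl
  | resume _ hfail => exact absurd (hfail.le_length.trans_lt (Nat.lt_succ_self _)) hj.not_gt

end FailsAt

/-- The entry `M(q, i) = Failure(j)` is semantically justified: a call with key `(q, i)`, followed
by the return frames of the component owning `q`, first fails at depth `j`. -/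
def KeyFailsAt (A0 : SubNFA Sigma S) (w : List Sigma) (key : S × ℕ) (j : ℕ) : Prop :=
  ∃ B κ, A0.HasStateAt B κ key.1 ∧ FailsAt w ((B, key.1) :: κ) (.successAt key.2) j

/-- Every entry of the memoization table `M` is semantically justified. -/
def TableSound (A0 : SubNFA Sigma S) (w : List Sigma) (M : S × ℕ → Option ℕ) : Prop :=
  ∀ key j, M key = some j → KeyFailsAt A0 w key j

/-- A result of `Memo-at` under the stack `κ` agrees with the result `ρ` of matching without
memoization. `Memo-at` may report a failure where `ρ` is a success: it then anticipates a failure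
in a frame of `κ`. The keys of `K` may be recorded with any depth at which `κ` fails later. -/
def ResultSound (A0 : SubNFA Sigma S) (w : List Sigma) (κ : Stack Sigma S) (ρ : Result) :
    AtResult S → Prop
  | .failure j => FailsAt w κ ρ j
  | .successAt i K => ρ = .successAt i ∧
      ∀ key ∈ K, ∀ j, FailsAt w κ (.successAt i) j → KeyFailsAt A0 w key j

theorem ResultSound.exists_eq_successAt {ρ : Result} {r : AtResult S}
    (h : ResultSound A0 w κ ρ r) (hr : ∀ j, r = .failure j → j ≠ κ.length) :
    ∃ i, ρ = .successAt i := by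
  cases r with
  | successAt i => exact ⟨i, h.1⟩
  | failure j => cases h with
    | failure => exact absurd rfl (hr _ rfl)
    | resume => exact ⟨_, rfl⟩

namespace TableSound

theorem empty (A0 : SubNFA Sigma S) (w : List Sigma) : TableSound A0 w fun _ => none :=
  fun _ _ h => nomatch h

variable [DecidableEq S] {M : S × ℕ → Option ℕ}

theorem batch {K : Finset (S × ℕ)} (hM : TableSound A0 w M)
    (hK : ∀ key ∈ K, KeyFailsAt A0 w key j) : TableSound A0 w (atBatch M K j) := by
  intro key j' hj'
  rw [atBatch] at hj'
  split at hj'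
  next hkey => cases hj'; exact hK key hkey
  next => exact hM key j' hj'

theorem record {r : AtResult S} (hM : TableSound A0 w M)
    (hr : ∀ j, r = .failure j → KeyFailsAt A0 w (q, i) j) :
    TableSound A0 w (atRecord M q i r) := by
  cases r with
  | successAt => exact hM
  | failure j =>
    have : atRecord M q i (.failure j) = atBatch M {(q, i)} j := by
      funext key
      simp only [atRecord, atBatch, Finset.mem_singleton]
    rw [this]
    exact hM.batch fun key hkey => Finset.mem_singleton.1 hkey ▸ hr j rfl

end TableSound

theorem ResultSound.final [DecidableEq S] {ρ : Result} {t : List (LaRunElem S)} {r : AtResult S}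
    (hq : A0.HasStateAt A κ q) (hmatch : LAMatchRun w A q i ρ t)
    (hr : ResultSound A0 w κ ρ r) : ResultSound A0 w κ ρ (atFinal q i r) := by
  cases r with
  | failure => exact hr
  | successAt i' K =>
    obtain ⟨rfl, hK⟩ := hr
    refine ⟨rfl, Finset.forall_mem_insert _ _ _ |>.2 ⟨fun j hfail => ?_, hK⟩⟩
    exact ⟨A, κ, hq, .resume hmatch hfail⟩

end Soundness

section Cost

variable {A0 A : SubNFA Sigma S} {w : List Sigma} {κ : Stack Sigma S} {q : S} {i m n : ℕ}
  {s t : List (AtRunElem S)} {e : AtRunElem S}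

/-- The key `(q, i)` of a run element `C(q, i)` or `M(q, i)`. -/
def AtRunElem.key : AtRunElem S → Option (S × ℕ)
  | .call q i | .memo q i => some (q, i)
  | .succ _ | .fail _ => none

theorem AtRunElem.key_eq_none (he : e.isRet = true) : e.key = none := by
  cases e <;> first | rfl | cases he

theorem AtResult.isRet_elem (r : AtResult S) : r.elem.isRet = true := by
  cases r <;> rfl

/-- The cost of a key `(q, i)`, that is the length of the run of its matching without memoization,
is at most `n`. -/
def CostLE (A0 : SubNFA Sigma S) (w : List Sigma) (n : ℕ) (key : S × ℕ) : Prop :=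
  ∃ B κ ρ t, A0.HasStateAt B κ key.1 ∧ LAMatchRun w B key.1 key.2 ρ t ∧ t.length ≤ n

/-- The run `s` is well nested, no key recurs within its own call, and all its keys cost at
most `n`. -/
structure RunBounded (A0 : SubNFA Sigma S) (w : List Sigma) (n : ℕ) (s : List (AtRunElem S)) :
    Prop where
  wellNested : WellNested AtRunElem.isRet (fun c b => ∀ x ∈ b, x.key ≠ c.key) s
  costLE : ∀ x ∈ s, ∀ key, x.key = some key → CostLE A0 w n key

namespace RunBounded

theorem nil (A0 : SubNFA Sigma S) (w : List Sigma) : RunBounded A0 w 0 [] :=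
  ⟨.nil, fun _ hx => nomatch hx⟩

theorem mono (hs : RunBounded A0 w m s) (h : m ≤ n) : RunBounded A0 w n s where
  wellNested := hs.wellNested
  costLE x hx key hkey :=
    let ⟨B, κ, ρ, t, hq, hmatch, ht⟩ := hs.costLE x hx key hkey
    ⟨B, κ, ρ, t, hq, hmatch, ht.trans h⟩

theorem append (hs : RunBounded A0 w m s) (ht : RunBounded A0 w n t) :
    RunBounded A0 w (max m n) (s ++ t) where
  wellNested := .append hs.wellNested ht.wellNested
  costLE x hx := (List.mem_append.1 hx).elim ((hs.mono (le_max_left m n)).costLE x)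
    ((ht.mono (le_max_right m n)).costLE x)

theorem wrap {c : AtRunElem S} {ρ : Result} {u : List (LaRunElem S)}
    (hN : A0.allStates.Nodup) (hq : A0.HasStateAt A κ q)
    (hmatch : LAMatchRun w A q i ρ u) (hs : RunBounded A0 w n s) (hn : n < u.length)
    (hc : c.isRet = false) (hkey : c.key = some (q, i)) (he : e.isRet = true) :
    RunBounded A0 w u.length (c :: s ++ [e]) where
  wellNested := by
    refine .wrap hc he hs.wellNested fun x hx hxc => ?_
    obtain ⟨B, κ', ρ', u', hqB, hmatch', hu'⟩ := hs.costLE x hx (q, i) (hxc.trans hkey)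
    obtain ⟨rfl, rfl⟩ := hq.unique hN hqB
    obtain ⟨-, rfl⟩ := hmatch.det hmatch'
    exact absurd hn hu'.not_gt
  costLE x hx key hxkey := by
    simp only [List.cons_append, List.mem_cons, List.mem_append, List.not_mem_nil, or_false] at hx
    rcases hx with rfl | hx | rfl
    · obtain rfl : (q, i) = key := Option.some.inj (hkey.symm.trans hxkey)
      exact ⟨A, κ, ρ, u, hq, hmatch, le_rfl⟩
    · exact (hs.mono hn.le).costLE x hx key hxkey
    · cases (AtRunElem.key_eq_none he).symm.trans hxkey

end RunBounded

end Cost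

theorem LAMatchRun.length_pos {A : SubNFA Sigma S} {w : List Sigma} {q : S} {i : ℕ} {ρ : Result}
    {t : List (LaRunElem S)} (h : LAMatchRun w A q i ρ t) : 0 < t.length := by
  cases h <;> simp

section Calls

/-- The outcome of a call `(q, i)` of `Memo-at` in the automaton `A` under the stack `κ`: the new
table `M` is sound, the result `r` agrees with matching without memoization, and the keys of the
run `s` cost no more than `(q, i)`. -/
structure CallSound (A0 : SubNFA Sigma S) (w : List Sigma) (A : SubNFA Sigma S)
    (κ : Stack Sigma S) (q : S) (i : ℕ) (M : S × ℕ → Option ℕ) (r : AtResult S)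
    (s : List (AtRunElem S)) : Prop where
  tableSound : TableSound A0 w M
  matched : ∃ ρ t, LAMatchRun w A q i ρ t ∧ ResultSound A0 w κ ρ r ∧ RunBounded A0 w t.length s

namespace CallSound

variable {A0 A A' : SubNFA Sigma S} {w : List Sigma} {κ : Stack Sigma S} {q q' q'' : S}
  {i i' j : ℕ} {M M₁ M₂ : S × ℕ → Option ℕ} {r : AtResult S} {s s₁ s₂ : List (AtRunElem S)}

theorem failure_le (h : CallSound A0 w A κ q i M (.failure j) s) : j ≤ κ.length := by
  obtain ⟨-, ρ, t, -, hfail, -⟩ := h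
  exact FailsAt.le_length hfail

theorem memoHit (hN : A0.allStates.Nodup) (hq : A0.HasStateAt A κ q) (hM : TableSound A0 w M)
    (hj : M (q, i) = some j) : CallSound A0 w A κ q i M (.failure j) [.memo q i, .fail j] := by
  obtain ⟨B, κ', hqB, hfail⟩ := hM _ _ hj
  obtain ⟨rfl, rfl⟩ := hq.unique hN hqB
  cases hfail with
  | resume hmatch hfail =>
    exact ⟨hM, _, _, hmatch, hfail,
      .wrap hN hq hmatch (.nil A0 w) hmatch.length_pos rfl rfl rfl⟩

theorem accept (hN : A0.allStates.Nodup) (hq : A0.HasStateAt A κ q) (hM : TableSound A0 w M)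
    (hF : q ∈ A.F) : CallSound A0 w A κ q i M (.successAt i {(q, i)}) [.call q i, .succ i] := by
  have hmatch : LAMatchRun w A q i (.successAt i) [.call q i, .succAt i] := .accept hF
  refine ⟨hM, _, _, hmatch, ⟨rfl, fun key hkey j hfail => ?_⟩,
    .wrap hN hq hmatch (.nil A0 w) hmatch.length_pos rfl rfl rfl⟩
  rw [Finset.mem_singleton] at hkey
  exact hkey ▸ ⟨A, κ, hq, .resume hmatch hfail⟩

variable [DecidableEq S]

theorem of_matchRun {n : ℕ} {ρ : Result} {t : List (LaRunElem S)} {e : AtRunElem S}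
    (hN : A0.allStates.Nodup) (hq : A0.HasStateAt A κ q) (hmatch : LAMatchRun w A q i ρ t)
    (hr : ResultSound A0 w κ ρ r) (hM : TableSound A0 w M) (hs : RunBounded A0 w n s)
    (hn : n < t.length) (he : e.isRet = true) :
    CallSound A0 w A κ q i (atRecord M q i r) (atFinal q i r) (.call q i :: s ++ [e]) where
  tableSound := hM.record fun j hj => by
    subst hj
    exact ⟨A, κ, hq, .resume hmatch hr⟩
  matched := ⟨ρ, t, hmatch, hr.final hq hmatch, hs.wrap hN hq hmatch hn rfl rfl he⟩

theorem of_tailCall (hN : A0.allStates.Nodup) (hq : A0.HasStateAt A κ q)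
    (hcall : CallSound A0 w A κ q' i' M r s)
    (hlift : ∀ ρ t, LAMatchRun w A q' i' ρ t → ResultSound A0 w κ ρ r →
      ∃ u, LAMatchRun w A q i ρ u ∧ t.length < u.length) :
    CallSound A0 w A κ q i (atRecord M q i r) (atFinal q i r) (.call q i :: s ++ [r.elem]) := by
  obtain ⟨hM, ρ, t, hmatch, hr, hs⟩ := hcall
  obtain ⟨u, hmatch', htu⟩ := hlift ρ t hmatch hr
  exact of_matchRun hN hq hmatch' hr hM hs htu r.isRet_elem

theorem charFail {σ : Sigma} (hN : A0.allStates.Nodup) (hq : A0.HasStateAt A κ q)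
    (hM : TableSound A0 w M) (hF : q ∉ A.F) (hT : A.T q = .char σ q') (hw : w[i]? ≠ some σ) :
    CallSound A0 w A κ q i (atRecord M q i (.failure κ.length)) (.failure κ.length)
      [.call q i, .fail κ.length] := by
  have hr : ResultSound A0 w κ .failure (.failure κ.length) := FailsAt.failure κ
  exact of_matchRun hN hq (.charFail hF hT hw) hr hM (.nil A0 w) (by simp) rfl

theorem branchNoBT (hN : A0.allStates.Nodup) (hq : A0.HasStateAt A κ q) (hF : q ∉ A.F)
    (hT : A.T q = .branch q' q'') (hleft : CallSound A0 w A κ q' i M r s)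
    (hr : ∀ j, r = .failure j → j ≠ κ.length) :
    CallSound A0 w A κ q i (atRecord M q i r) (atFinal q i r) (.call q i :: s ++ [r.elem]) := by
  refine hleft.of_tailCall hN hq fun ρ t hmatch hρ => ?_
  obtain ⟨i', rfl⟩ := hρ.exists_eq_successAt hr
  exact ⟨_, .branchSucc hF hT hmatch, by simp⟩

theorem branchBT (hN : A0.allStates.Nodup) (hq : A0.HasStateAt A κ q) (hF : q ∉ A.F)
    (hT : A.T q = .branch q' q'')
    (hleft : CallSound A0 w A κ q' i M₁ (.failure κ.length) s₁)
    (hright : CallSound A0 w A κ q'' i M₂ r s₂) :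
    CallSound A0 w A κ q i (atRecord M₂ q i r) (atFinal q i r)
      (.call q i :: s₁ ++ s₂ ++ [r.elem]) := by
  obtain ⟨-, ρ₁, t₁, hmatch₁, hfail, hs₁⟩ := hleft
  obtain ⟨hM, ρ₂, t₂, hmatch₂, hr, hs₂⟩ := hright
  obtain rfl := FailsAt.eq_failure hfail le_rfl
  exact of_matchRun hN hq (.branchFail hF hT hmatch₁ hmatch₂) hr hM (hs₁.append hs₂) (by grind)
    r.isRet_elem

theorem subFail (hN : A0.allStates.Nodup) (hq : A0.HasStateAt A κ q) (hF : q ∉ A.F)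
    (hT : A.T q = .sub .at A' q')
    (hsub : CallSound A0 w A' ((A, q') :: κ) A'.q0 i M (.failure j) s) :
    CallSound A0 w A κ q i (atRecord M q i (.failure (min κ.length j)))
      (.failure (min κ.length j)) (.call q i :: s ++ [.fail (min κ.length j)]) := by
  obtain ⟨hM, ρ₁, t₁, hmatch₁, hfail, hs⟩ := hsub
  obtain _ | ⟨hmatch₂, hfail₂⟩ := hfail
  · rw [List.length_cons, min_eq_left (Nat.le_succ _)]
    exact of_matchRun hN hq (.atFail hF hT hmatch₁) (FailsAt.failure κ) hM hs (by simp) rfl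
  · rw [min_eq_right hfail₂.le_length]
    exact of_matchRun hN hq (.atSucc hF hT hmatch₁ hmatch₂) hfail₂ hM hs (by grind) rfl

theorem subSuccSucc {i'' : ℕ} {K' K'' : Finset (S × ℕ)} (hN : A0.allStates.Nodup)
    (hq : A0.HasStateAt A κ q) (hF : q ∉ A.F) (hT : A.T q = .sub .at A' q')
    (hsub : CallSound A0 w A' ((A, q') :: κ) A'.q0 i M₁ (.successAt i' K') s₁)
    (hcont : CallSound A0 w A κ q' i' M₂ (.successAt i'' K'') s₂) :
    CallSound A0 w A κ q i M₂ (atFinal q i (.successAt i'' (K' ∪ K'')))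
      (.call q i :: s₁ ++ s₂ ++ [.succ i'']) := by
  obtain ⟨-, _, t₁, hmatch₁, ⟨rfl, hK'⟩, hs₁⟩ := hsub
  obtain ⟨hM, _, t₂, hmatch₂, ⟨rfl, hK''⟩, hs₂⟩ := hcont
  have hr : ResultSound A0 w κ (.successAt i'') (.successAt i'' (K' ∪ K'')) :=
    ⟨rfl, fun key hkey j hfail => (Finset.mem_union.1 hkey).elim
      (fun hkey => hK' key hkey j (.resume hmatch₂ hfail)) (fun hkey => hK'' key hkey j hfail)⟩
  exact of_matchRun hN hq (.atSucc hF hT hmatch₁ hmatch₂) hr hM (hs₁.append hs₂) (by grind)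
    rfl

theorem subSuccFail {K' : Finset (S × ℕ)} (hN : A0.allStates.Nodup)
    (hq : A0.HasStateAt A κ q) (hF : q ∉ A.F) (hT : A.T q = .sub .at A' q')
    (hsub : CallSound A0 w A' ((A, q') :: κ) A'.q0 i M₁ (.successAt i' K') s₁)
    (hcont : CallSound A0 w A κ q' i' M₂ (.failure j) s₂) :
    CallSound A0 w A κ q i (atRecord (atBatch M₂ K' j) q i (.failure j)) (.failure j)
      (.call q i :: s₁ ++ s₂ ++ [.fail j]) := by
  obtain ⟨-, _, t₁, hmatch₁, ⟨rfl, hK'⟩, hs₁⟩ := hsub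
  obtain ⟨hM, ρ, t₂, hmatch₂, hfail, hs₂⟩ := hcont
  have hbatch : TableSound A0 w (atBatch M₂ K' j) :=
    hM.batch fun key hkey => hK' key hkey j (.resume hmatch₂ hfail)
  exact of_matchRun hN hq (.atSucc hF hT hmatch₁ hmatch₂) hfail hbatch (hs₁.append hs₂)
    (by grind) rfl

end CallSound

theorem MemoAtRun.callSound [DecidableEq S] {A0 A : SubNFA Sigma S} {w : List Sigma}
    {κ : Stack Sigma S} {q : S} {i : ℕ} {M M' : S × ℕ → Option ℕ} {r : AtResult S}
    {s : List (AtRunElem S)} (hWF : A0.WF) (hrun : MemoAtRun A0 w A q i M M' r s)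
    (hq : A0.HasStateAt A κ q) (hM : TableSound A0 w M) : CallSound A0 w A κ q i M' r s := by
  induction hrun generalizing κ with
  | memoHit hj => exact .memoHit hWF.2 hq hM hj
  | accept _ hF => exact .accept hWF.2 hq hM hF
  | eps _ hF hT _ ih =>
    have hcall := ih (hq.target hWF hF hT (by simp [SubTrans.targets])) hM
    exact hcall.of_tailCall hWF.2 hq fun _ _ hmatch _ => ⟨_, .eps hF hT hmatch, by simp⟩
  | branchNoBT _ hF hT _ hne ih =>
    have hleft := ih (hq.target hWF hF hT (by simp [SubTrans.targets])) hM
    exact hleft.branchNoBT hWF.2 hq hF hT (hq.nu_eq_length hWF.2 ▸ hne)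
  | branchBTSucc _ hF hT _ _ ih₁ ih₂ =>
    rw [hq.nu_eq_length hWF.2] at ih₁
    have hleft := ih₁ (hq.target hWF hF hT (by simp [SubTrans.targets])) hM
    have hright := ih₂ (hq.target hWF hF hT (by simp [SubTrans.targets])) hleft.tableSound
    exact hleft.branchBT hWF.2 hq hF hT hright
  | branchBTFail _ hF hT _ _ ih₁ ih₂ =>
    rw [hq.nu_eq_length hWF.2] at ih₁ ⊢
    have hleft := ih₁ (hq.target hWF hF hT (by simp [SubTrans.targets])) hM
    have hright := ih₂ (hq.target hWF hF hT (by simp [SubTrans.targets])) hleft.tableSound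
    rw [min_eq_right hright.failure_le]
    exact hleft.branchBT hWF.2 hq hF hT hright
  | charSucc _ hF hT hw _ ih =>
    have hcall := ih (hq.target hWF hF hT (by simp [SubTrans.targets])) hM
    exact hcall.of_tailCall hWF.2 hq fun _ _ hmatch _ => ⟨_, .charSucc hF hT hw hmatch, by simp⟩
  | charFail _ hF hT hw => exact hq.nu_eq_length hWF.2 ▸ .charFail hWF.2 hq hM hF hT hw
  | subSuccSucc _ hF hT _ _ ih₁ ih₂ =>
    have hsub := ih₁ (hq.push hWF hT) hM
    have hcont := ih₂ (hq.target hWF hF hT (by simp [SubTrans.targets])) hsub.tableSound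
    exact hsub.subSuccSucc hWF.2 hq hF hT hcont
  | subSuccFail _ hF hT _ _ ih₁ ih₂ =>
    have hsub := ih₁ (hq.push hWF hT) hM
    have hcont := ih₂ (hq.target hWF hF hT (by simp [SubTrans.targets])) hsub.tableSound
    exact hsub.subSuccFail hWF.2 hq hF hT hcont
  | subFailHigh _ hF hT _ hj ih =>
    rw [← min_eq_left hj.le, hq.nu_eq_length hWF.2]
    exact (ih (hq.push hWF hT) hM).subFail hWF.2 hq hF hT
  | subFailLow _ hF hT _ hj ih =>
    rw [← min_eq_right hj, hq.nu_eq_length hWF.2]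
    exact (ih (hq.push hWF hT) hM).subFail hWF.2 hq hF hT

end Calls

theorem memoAt_no_reentry_general [DecidableEq S] {A : SubNFA Sigma S} (hWF : A.WF)
    {w : List Sigma} {i₀ : ℕ} {M' : S × ℕ → Option ℕ} {r : AtResult S} {s : List (AtRunElem S)}
    (hrun : MemoAtRun A w A A.q0 i₀ (fun _ => none) M' r s) {q : S} {i ℓ m : ℕ}
    (hc : s[ℓ]? = some (.call q i)) (hφ : phi AtRunElem.isRet s ℓ = some m) :
    ∀ ℓ', ℓ + 1 ≤ ℓ' → ℓ' ≤ m →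
      s[ℓ']? ≠ some (.call q i) ∧ s[ℓ']? ≠ some (.memo q i) := by
  obtain ⟨-, ρ, t, -, -, hs⟩ := hrun.callSound hWF (.initial hWF) (.empty A w)
  obtain ⟨b, hfresh, hslice⟩ := hs.wellNested.exists_body_of_phi_eq_some hc rfl hφ
  intro ℓ' hℓ hm
  have hkey : ∀ x, s[ℓ']? = some x → x.key ≠ some (q, i) := fun x hx =>
    (hslice ℓ' x hℓ hm hx).elim (hfresh x) fun hret h => by cases (x.key_eq_none hret).symm.trans h
  exact ⟨fun h => hkey _ h rfl, fun h => hkey _ h rfl⟩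

/-- **Lemma 11** (no re-entry during a pending call of `Memo-at`): for every run `s` of
an execution of `Memo-at` and every index `ℓ` with `s[ℓ] = C(q, i)`, neither `C(q, i)`
nor `M(q, i)` appears in the subsequence `s[ℓ+1] … s[φ_s(ℓ)]`. -/
theorem memoAt_no_reentry {Sigma S : Type} [DecidableEq S]
    (A : SubNFA Sigma S) (hWF : A.WF) (hAt : A.IsAtNFA) (hLoop : A.NoEpsLoops)
    (w : List Sigma) (i0 : ℕ) (hi0 : i0 ≤ w.length)
    {M' : S × ℕ → Option ℕ} {r : AtResult S} {s : List (AtRunElem S)}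
    (hrun : MemoAtRun A w A A.q0 i0 (fun _ => none) M' r s)
    {q : S} {i ℓ m : ℕ}
    (hc : s[ℓ]? = some (AtRunElem.call q i))
    (hφ : phi AtRunElem.isRet s ℓ = some m) :
    ∀ ℓ', ℓ + 1 ≤ ℓ' → ℓ' ≤ m →
      s[ℓ']? ≠ some (AtRunElem.call q i) ∧ s[ℓ']? ≠ some (AtRunElem.memo q i) :=
  memoAt_no_reentry_general hWF hrun hc hφ

end RegexMemo
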